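/- arXiv:1505.06651 — 4 statements merged into one kernel-verified Lean document; each statement's English description precedes it below -/
import Mathlib

section
/- The composition axiom COMPKh is valid: for all formulas φ, χ, ρ of L_Kh, the formula Kh(φ,ρ) ∧ Kh(ρ,χ) → Kh(φ,χ) is true at every state of every model. -/
/-- Formulas of the language L_Kh. -/
inductive Formula (P : Type) : Type
  | top : Formula P
  | atom : P → Formula P
  | neg : Formula P → Formula P
  | and : Formula P → Formula P → Formula P
  | kh : Formula P → Formula P → Formula P

namespace Formula

/-- ⊥ abbreviates ¬⊤. -/
def bot {P : Type} : Formula P := neg top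

/-- φ → ψ abbreviates ¬(φ ∧ ¬ψ). -/
def imp {P : Type} (φ ψ : Formula P) : Formula P := neg (φ.and ψ.neg)

/-- φ ↔ ψ. -/
def iff_ {P : Type} (φ ψ : Formula P) : Formula P := (φ.imp ψ).and (ψ.imp φ)

/-- Uφ abbreviates Kh(¬φ, ⊥). -/
def U {P : Type} (φ : Formula P) : Formula P := kh (neg φ) bot

end Formula

/-- A model (ability map): a labelled transition system with a nonempty set
of states, transitions labelled by action symbols in `A`, and a valuation. -/
structure Model (P A : Type) where
  S : Type
  ne : Nonempty S
  R : A → S → S → Prop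
  V : S → Set P

namespace Model

/-- `runs M σ s t` means s →σ t. -/
def runs {P A : Type} (M : Model P A) : List A → M.S → M.S → Prop
  | [], s, t => s = t
  | a :: σ, s, t => ∃ u, M.R a s u ∧ M.runs σ u t

/-- σ = a₁…aₙ is strongly executable at s: for every k < n and every t
reached from s by the length-k prefix of σ, t has an a_{k+1}-successor. -/
def SE {P A : Type} (M : Model P A) (σ : List A) (s : M.S) : Prop :=
  ∀ (k : ℕ) (hk : k < σ.length) (t : M.S),
    M.runs (σ.take k) s t → ∃ u, M.R (σ.get ⟨k, hk⟩) t u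

end Model

/-- Truth of a formula at a state of a model. -/
def Sat {P A : Type} (M : Model P A) : Formula P → M.S → Prop
  | .top, _ => True
  | .atom p, s => p ∈ M.V s
  | .neg φ, s => ¬ Sat M φ s
  | .and φ ψ, s => Sat M φ s ∧ Sat M ψ s
  | .kh ψ φ, _ => ∃ σ : List A, ∀ s' : M.S, Sat M ψ s' →
      M.SE σ s' ∧ ∀ t : M.S, M.runs σ s' t → Sat M φ t

/-- Validity: truth at every state of every model (over a countable
nonempty set of action symbols). -/
def Valid {P : Type} (φ : Formula P) : Prop :=
  ∀ (A : Type) [Countable A] [Nonempty A] (M : Model P A) (s : M.S), Sat M φ s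

/-- Boolean evaluation of a formula, treating atoms and Kh-formulas as
propositional variables (used to define instances of propositional tautologies). -/
def evalB {P : Type} (v : Formula P → Bool) : Formula P → Bool
  | .top => true
  | .atom p => v (.atom p)
  | .neg φ => !(evalB v φ)
  | .and φ ψ => evalB v φ && evalB v ψ
  | .kh ψ φ => v (.kh ψ φ)

/-- Uniform substitution of formulas for proposition letters. -/
def subst {P : Type} (s : P → Formula P) : Formula P → Formula P
  | .top => .top
  | .atom p => s p
  | .neg φ => (subst s φ).neg
  | .and φ ψ => (subst s φ).and (subst s ψ)
  | .kh ψ φ => (subst s ψ).kh (subst s φ)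

/-- The proof system SKH. -/
inductive Derivable {P : Type} : Formula P → Prop
  /-- all instances of propositional tautologies -/
  | taut {φ : Formula P} : (∀ v : Formula P → Bool, evalB v φ = true) → Derivable φ
  /-- DISTU -/
  | distU (φ ψ : Formula P) : Derivable (((φ.U).and ((φ.imp ψ).U)).imp ψ.U)
  /-- COMPKh -/
  | compKh (φ ρ χ : Formula P) : Derivable (((φ.kh ρ).and (ρ.kh χ)).imp (φ.kh χ))
  /-- EMP -/
  | emp (φ χ : Formula P) : Derivable (((φ.imp χ).U).imp (φ.kh χ))
  /-- TU -/
  | tU (φ : Formula P) : Derivable ((φ.U).imp φ)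
  /-- 4KU -/
  | fourKU (φ χ : Formula P) : Derivable ((φ.kh χ).imp ((φ.kh χ).U))
  /-- 5KU -/
  | fiveKU (φ χ : Formula P) : Derivable (((φ.kh χ).neg).imp (((φ.kh χ).neg).U))
  /-- modus ponens -/
  | mp {φ ψ : Formula P} : Derivable (φ.imp ψ) → Derivable φ → Derivable ψ
  /-- NECU -/
  | necU {φ : Formula P} : Derivable φ → Derivable φ.U
  /-- SUB: uniform substitution -/
  | sub {φ : Formula P} (s : P → Formula P) : Derivable φ → Derivable (subst s φ)

/-- A set of formulas is SKH-consistent if no finite conjunction of its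
members proves ⊥ in SKH. -/
def Consistent {P : Type} (Γ : Set (Formula P)) : Prop :=
  ¬ ∃ l : List (Formula P), (∀ φ ∈ l, φ ∈ Γ) ∧
      Derivable ((l.foldr Formula.and Formula.top).imp Formula.bot)

/-- Maximal consistent set. -/
def MCS {P : Type} (Γ : Set (Formula P)) : Prop :=
  Consistent Γ ∧ ∀ Δ : Set (Formula P), Consistent Δ → Γ ⊆ Δ → Δ = Γ

/-- Δ|_Kh : the Kh-formulas in Δ. -/
def khPart {P : Type} (Δ : Set (Formula P)) : Set (Formula P) :=
  {χ | χ ∈ Δ ∧ ∃ ψ φ : Formula P, χ = ψ.kh φ}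

/-- The states S^c_Γ of the canonical model for Γ. -/
def canonStates {P : Type} (Γ : Set (Formula P)) : Set (Set (Formula P)) :=
  {Δ | MCS Δ ∧ khPart Δ = khPart Γ}

/-- The action symbols Σ_Γ of the canonical model: pairs ⟨ψ,φ⟩ with Kh(ψ,φ) ∈ Γ. -/
def SigmaGamma {P : Type} (Γ : Set (Formula P)) : Type :=
  {pr : Formula P × Formula P // (pr.1.kh pr.2) ∈ Γ}

/-- The canonical model M^c_Γ for a maximal consistent set Γ. -/
def canonicalModel {P : Type} (Γ : Set (Formula P)) (hΓ : MCS Γ) :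
    Model P (SigmaGamma Γ) where
  S := {Δ : Set (Formula P) // Δ ∈ canonStates Γ}
  ne := ⟨⟨Γ, hΓ, rfl⟩⟩
  R := fun a Δ Θ => a.val.1 ∈ Δ.val ∧ a.val.2 ∈ Θ.val
  V := fun Δ => {p | Formula.atom p ∈ Δ.val}

namespace Model

variable {P A : Type} (M : Model P A)

theorem runs_append (σ η : List A) (s t : M.S) :
    M.runs (σ ++ η) s t ↔ ∃ u, M.runs σ s u ∧ M.runs η u t := by
  induction σ generalizing s with
  | nil => simp only [List.nil_append, runs, exists_eq_left']
  | cons a σ ih =>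
    simp only [List.cons_append, runs, ih]
    tauto

theorem se_nil (s : M.S) : M.SE [] s :=
  fun _ hk => absurd hk (Nat.not_lt_zero _)

theorem se_cons (a : A) (σ : List A) (s : M.S) :
    M.SE (a :: σ) s ↔ (∃ u, M.R a s u) ∧ ∀ u, M.R a s u → M.SE σ u := by
  constructor
  · intro h
    exact ⟨h 0 (Nat.succ_pos _) s rfl,
      fun u hu k hk t ht => h (k + 1) (Nat.succ_lt_succ hk) t ⟨u, hu, ht⟩⟩
  · rintro ⟨hstep, hrest⟩ (_ | k) hk t ht
    · obtain rfl : s = t := ht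
      exact hstep
    · obtain ⟨u, hu, hut⟩ := ht
      exact hrest u hu k (Nat.lt_of_succ_lt_succ hk) t hut

theorem se_append (σ η : List A) (s : M.S) :
    M.SE (σ ++ η) s ↔ M.SE σ s ∧ ∀ u, M.runs σ s u → M.SE η u := by
  induction σ generalizing s with
  | nil => simp only [List.nil_append, runs, se_nil, true_and, forall_eq']
  | cons a σ ih =>
    simp only [List.cons_append, se_cons, runs, ih]
    grind

/-- The plan `σ` witnesses knowing how to get from `X` to `Y`: at every `X`-state it is strongly
executable and all its runs end in `Y`. This is the semantic content of `Kh`, with arbitrary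
predicates on states in place of formulas. -/
def Witnesses (σ : List A) (X Y : M.S → Prop) : Prop :=
  ∀ s, X s → M.SE σ s ∧ ∀ t, M.runs σ s t → Y t

variable {M}

theorem Witnesses.append {σ η : List A} {X Y Z : M.S → Prop}
    (hσ : M.Witnesses σ X Y) (hη : M.Witnesses η Y Z) : M.Witnesses (σ ++ η) X Z := by
  intro s hs
  obtain ⟨hσs, hσY⟩ := hσ s hs
  constructor
  · exact (M.se_append σ η s).2 ⟨hσs, fun u hu => (hη u (hσY u hu)).1⟩
  · intro t ht
    obtain ⟨u, hu, hut⟩ := (M.runs_append σ η s t).1 ht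
    exact (hη u (hσY u hu)).2 t hut

end Model

section

variable {P A : Type} (M : Model P A) (s : M.S)

theorem sat_imp (φ ψ : Formula P) :
    Sat M (φ.imp ψ) s ↔ (Sat M φ s → Sat M ψ s) := by
  simp only [Formula.imp, Sat, not_and, not_not]

theorem sat_kh (ψ φ : Formula P) :
    Sat M (ψ.kh φ) s ↔ ∃ σ, M.Witnesses σ (Sat M ψ) (Sat M φ) :=
  Iff.rfl

theorem compKh_valid_general (φ χ ρ : Formula P) :
    Sat M (((φ.kh ρ).and (ρ.kh χ)).imp (φ.kh χ)) s := by
  rw [sat_imp]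
  rintro ⟨hφρ, hρχ⟩
  rw [sat_kh] at hφρ hρχ ⊢
  obtain ⟨σ, hσ⟩ := hφρ
  obtain ⟨η, hη⟩ := hρχ
  exact ⟨σ ++ η, hσ.append hη⟩

end

/-- the composition axiom COMPKh, Kh(φ,ρ) ∧ Kh(ρ,χ) → Kh(φ,χ),
is valid. -/
theorem compKh_valid {P : Type} (φ χ ρ : Formula P) :
    Valid (((φ.kh ρ).and (ρ.kh χ)).imp (φ.kh χ)) :=
  fun _ _ _ M s => compKh_valid_general M s φ χ ρ
end

section
/- The axiom TU is valid: for every formula φ of L_Kh, the formula Uφ → φ is true at every state of every model. -/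
section

variable {P A : Type} {M : Model P A}

namespace Model

theorem se_cons_iff {a : A} {σ : List A} {s : M.S} :
    M.SE (a :: σ) s ↔ (∃ u, M.R a s u) ∧ ∀ u, M.R a s u → M.SE σ u := by
  constructor
  · intro h
    exact ⟨h 0 (Nat.succ_pos _) s rfl, fun u hu k hk t ht =>
      h (k + 1) (Nat.succ_lt_succ hk) t ⟨u, hu, ht⟩⟩
  · rintro ⟨hstep, htail⟩ (_ | k) hk t hrun
    · obtain rfl : s = t := hrun
      exact hstep
    · obtain ⟨u, hu, hrun⟩ := hrun
      exact htail u hu k (Nat.lt_of_succ_lt_succ hk) t hrun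

theorem SE.exists_runs {σ : List A} {s : M.S} (h : M.SE σ s) : ∃ t, M.runs σ s t := by
  induction σ generalizing s with
  | nil => exact ⟨s, rfl⟩
  | cons a σ ih =>
    obtain ⟨⟨u, hu⟩, htail⟩ := se_cons_iff.mp h
    obtain ⟨t, hrun⟩ := ih (htail u hu)
    exact ⟨t, u, hu, hrun⟩

end Model

theorem not_sat_bot (s : M.S) : ¬ Sat M Formula.bot s :=
  fun h => h trivial

theorem sat_imp_iff {φ ψ : Formula P} {s : M.S} :
    Sat M (φ.imp ψ) s ↔ (Sat M φ s → Sat M ψ s) :=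
  not_and_not_right

/-- A plan strongly executable at a `ψ`-state has a run from it, and that run would have to end
in a `⊥`-state. -/
theorem sat_kh_bot_iff {ψ : Formula P} {s : M.S} :
    Sat M (ψ.kh Formula.bot) s ↔ ∀ t, ¬ Sat M ψ t := by
  constructor
  · rintro ⟨σ, hσ⟩ t hψ
    obtain ⟨hexec, hbot⟩ := hσ t hψ
    obtain ⟨u, hrun⟩ := hexec.exists_runs
    exact not_sat_bot u (hbot u hrun)
  · exact fun hψ => ⟨[], fun t ht => absurd ht (hψ t)⟩

theorem sat_U_iff {φ : Formula P} {s : M.S} : Sat M φ.U s ↔ ∀ t, Sat M φ t :=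
  sat_kh_bot_iff.trans (forall_congr' fun _ => not_not)

theorem tU_valid_general (φ : Formula P) (s : M.S) : Sat M ((φ.U).imp φ) s :=
  sat_imp_iff.mpr fun hU => sat_U_iff.mp hU s

end

/-- the axiom TU, Uφ → φ, is valid. -/
theorem tU_valid {P : Type} (φ : Formula P) :
    Valid ((φ.U).imp φ) := by
  intro A _ _ M s
  exact tU_valid_general φ s
end

section
/- The weakening/strengthening formula WSKh is derivable in SKH: for all formulas φ, χ, ρ, ο of L_Kh, ⊢ U(φ→ρ) ∧ U(ο→χ) ∧ Kh(ρ,ο) → Kh(φ,χ). -/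
section

variable {P : Type} {φ ψ χ ρ ο : Formula P}

@[simp]
theorem evalB_and_eq_true_iff {v : Formula P → Bool} :
    evalB v (φ.and ψ) = true ↔ evalB v φ = true ∧ evalB v ψ = true := by
  rw [evalB, Bool.and_eq_true]

@[simp]
theorem evalB_imp_eq_true_iff {v : Formula P → Bool} :
    evalB v (φ.imp ψ) = true ↔ (evalB v φ = true → evalB v ψ = true) := by
  cases hφ : evalB v φ <;> simp [Formula.imp, evalB, hφ]

namespace Derivable

theorem of_tautological_consequence₂
    (h : ∀ v : Formula P → Bool, evalB v φ = true → evalB v ψ = true → evalB v χ = true)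
    (hφ : Derivable φ) (hψ : Derivable ψ) : Derivable χ :=
  have hImp : Derivable (φ.imp (ψ.imp χ)) := taut fun v => by
    simpa only [evalB_imp_eq_true_iff] using h v
  mp (mp hImp hφ) hψ

theorem and_imp_left : Derivable ((φ.and ψ).imp φ) :=
  taut fun v => by simp +contextual

theorem and_imp_right : Derivable ((φ.and ψ).imp ψ) :=
  taut fun v => by simp

theorem imp_trans (h₁ : Derivable (φ.imp ψ)) (h₂ : Derivable (ψ.imp χ)) :
    Derivable (φ.imp χ) :=
  of_tautological_consequence₂ (fun v => by simp +contextual) h₁ h₂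

theorem imp_and (h₁ : Derivable (φ.imp ψ)) (h₂ : Derivable (φ.imp χ)) :
    Derivable (φ.imp (ψ.and χ)) :=
  of_tautological_consequence₂ (fun v => by simp +contextual) h₁ h₂

theorem imp_kh_trans (h₁ : Derivable (ψ.imp (φ.kh ρ))) (h₂ : Derivable (ψ.imp (ρ.kh χ))) :
    Derivable (ψ.imp (φ.kh χ)) :=
  (h₁.imp_and h₂).imp_trans (compKh φ ρ χ)

theorem kh_strengthen_precondition :
    Derivable (((φ.imp ρ).U.and (ρ.kh ο)).imp (φ.kh ο)) :=
  imp_kh_trans (and_imp_left.imp_trans (emp φ ρ)) and_imp_right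

theorem kh_weaken_postcondition :
    Derivable (((ο.imp χ).U.and (ρ.kh ο)).imp (ρ.kh χ)) :=
  imp_kh_trans and_imp_right (and_imp_left.imp_trans (emp ο χ))

end Derivable

end

/-- WSKh is derivable in SKH:
⊢ U(φ→ρ) ∧ U(ο→χ) ∧ Kh(ρ,ο) → Kh(φ,χ). -/
theorem wskh_derivable {P : Type} (φ χ ρ ο : Formula P) :
    Derivable ((((φ.imp ρ).U).and ((((ο.imp χ).U)).and (ρ.kh ο))).imp (φ.kh χ)) := by
  have hPost : Derivable (((φ.imp ρ).U.and ((ο.imp χ).U.and (ρ.kh ο))).imp (ρ.kh χ)) :=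
    Derivable.and_imp_right.imp_trans Derivable.kh_weaken_postcondition
  exact (Derivable.and_imp_left.imp_and hPost).imp_trans Derivable.kh_strengthen_precondition
end

section
/- In the canonical model: if a formula φ belongs to every state Δ of S^c_Γ, then Uφ belongs to every state Δ of S^c_Γ. -/
/-!
If `φ.U ∉ Δ` for a state `Δ`, then, `U` being a normal modality, `¬φ` is consistent with
`{χ | χ.U ∈ Δ}`, so some maximal consistent `Θ` contains both. Kh-formulas and their negations are
preserved by prefixing `U` (4KU and 5KU), hence `Θ` agrees with `Δ` on Kh-formulas: it is a state
omitting `φ`.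
-/

section

variable {P : Type} {G H Δ Θ : Set (Formula P)} {φ ψ χ : Formula P} {l m : List (Formula P)}

theorem evalB_imp (v : Formula P → Bool) (φ ψ : Formula P) :
    evalB v (φ.imp ψ) = true ↔ (evalB v φ = true → evalB v ψ = true) := by
  cases hφ : evalB v φ <;> cases hψ : evalB v ψ <;> simp [Formula.imp, evalB, hφ, hψ]

/-- The finite conjunctions in terms of which `Consistent` is phrased; the empty one is `⊤`. -/
abbrev Formula.conj (l : List (Formula P)) : Formula P := l.foldr Formula.and Formula.top

theorem evalB_conj (v : Formula P → Bool) (l : List (Formula P)) :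
    evalB v (Formula.conj l) = true ↔ ∀ φ ∈ l, evalB v φ = true := by
  induction l with
  | nil => simp [evalB]
  | cons φ l ih => simp [evalB, ih]

namespace Derivable

theorem of_evalB_imp (hφ : Derivable φ) (h : ∀ v, evalB v φ = true → evalB v ψ = true) :
    Derivable ψ :=
  mp (taut fun v => (evalB_imp v φ ψ).2 (h v)) hφ

theorem imp_of_right (hψ : Derivable ψ) : Derivable (φ.imp ψ) :=
  hψ.of_evalB_imp fun v hv => (evalB_imp v φ ψ).2 fun _ => hv

theorem imp_mp (h : Derivable (χ.imp (φ.imp ψ))) (hφ : Derivable (χ.imp φ)) :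
    Derivable (χ.imp ψ) := by
  refine mp (h.of_evalB_imp fun v => ?_) hφ
  simp only [evalB_imp]
  tauto

theorem imp_imp_of_and_imp (h : Derivable ((φ.and ψ).imp χ)) :
    Derivable (ψ.imp (φ.imp χ)) := by
  refine h.of_evalB_imp fun v => ?_
  simp only [evalB_imp, evalB, Bool.and_eq_true]
  tauto

theorem conj_imp_of_subset (hlm : l ⊆ m) (h : Derivable ((Formula.conj l).imp φ)) :
    Derivable ((Formula.conj m).imp φ) := by
  refine h.of_evalB_imp fun v => ?_
  simp only [evalB_imp, evalB_conj]
  exact fun hl hm => hl fun ψ hψ => hm ψ (hlm hψ)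

end Derivable

/-- Derivability of `φ` in SKH from a set `G` of local assumptions, to which NECU and SUB do not
apply. By definition `Consistent G` is `¬ DerivableFrom G ⊥`. -/
def DerivableFrom (G : Set (Formula P)) (φ : Formula P) : Prop :=
  ∃ l : List (Formula P), (∀ ψ ∈ l, ψ ∈ G) ∧ Derivable ((Formula.conj l).imp φ)

namespace DerivableFrom

theorem of_derivable (h : Derivable φ) : DerivableFrom G φ :=
  ⟨[], by simp, h.imp_of_right⟩

theorem of_mem (h : φ ∈ G) : DerivableFrom G φ :=
  ⟨[φ], by simpa using h, .taut fun v => by simp [evalB_imp, evalB]⟩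

theorem mono (hGH : G ⊆ H) : DerivableFrom G φ → DerivableFrom H φ
  | ⟨l, hl, h⟩ => ⟨l, fun ψ hψ => hGH (hl ψ hψ), h⟩

theorem mp (h : DerivableFrom G (φ.imp ψ)) (hφ : DerivableFrom G φ) : DerivableFrom G ψ := by
  obtain ⟨l, hl, hlφψ⟩ := h
  obtain ⟨m, hm, hmφ⟩ := hφ
  refine ⟨l ++ m, fun χ hχ => (List.mem_append.1 hχ).elim (hl χ) (hm χ), ?_⟩
  exact (hlφψ.conj_imp_of_subset (List.subset_append_left l m)).imp_mp
    (hmφ.conj_imp_of_subset (List.subset_append_right l m))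

theorem of_evalB_imp (hφ : DerivableFrom G φ) (h : ∀ v, evalB v φ = true → evalB v ψ = true) :
    DerivableFrom G ψ :=
  mp (of_derivable (.taut fun v => (evalB_imp v φ ψ).2 (h v))) hφ

theorem imp_of_insert (h : DerivableFrom (insert φ G) ψ) : DerivableFrom G (φ.imp ψ) := by
  classical
  obtain ⟨l, hl, hlψ⟩ := h
  have hsub : l ⊆ φ :: l.filter (· ≠ φ) := fun χ hχ => by
    by_cases hχφ : χ = φ <;> simp [hχφ, hχ]
  refine ⟨l.filter (· ≠ φ), fun χ hχ => ?_, (hlψ.conj_imp_of_subset hsub).imp_imp_of_and_imp⟩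
  obtain ⟨hχl, hχφ⟩ : χ ∈ l ∧ χ ≠ φ := by simpa using hχ
  exact (hl χ hχl).resolve_left hχφ

theorem U_mp (h : DerivableFrom G (φ.imp ψ).U) (hφ : DerivableFrom G φ.U) :
    DerivableFrom G ψ.U :=
  mp (mp (of_derivable (.imp_imp_of_and_imp (.distU φ ψ))) h) hφ

theorem U_of_preimage_U (h : DerivableFrom (Formula.U ⁻¹' G) φ) : DerivableFrom G φ.U := by
  obtain ⟨l, hl, hlφ⟩ := h
  induction l generalizing φ with
  | nil => exact of_derivable (.necU (.mp hlφ (.taut fun _ => rfl)))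
  | cons ψ l ih =>
    obtain ⟨hψ, hl⟩ := List.forall_mem_cons.1 hl
    exact U_mp (ih hl hlφ.imp_imp_of_and_imp) (of_mem hψ)

end DerivableFrom

namespace Consistent

theorem not_derivableFrom_neg (hG : Consistent G) (hφ : DerivableFrom G φ) :
    ¬ DerivableFrom G φ.neg := fun hφn =>
  hG (DerivableFrom.mp (hφn.of_evalB_imp fun v => by simp +contextual [evalB_imp, evalB]) hφ)

theorem insert_of_not_derivableFrom_neg (h : ¬ DerivableFrom G φ.neg) :
    Consistent (insert φ G) := fun hbot =>
  h ((DerivableFrom.imp_of_insert hbot).of_evalB_imp fun v => by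
    simp [evalB_imp, Formula.bot, evalB])

end Consistent

theorem isOfFiniteCharacter_setOf_consistent :
    Order.IsOfFiniteCharacter {G : Set (Formula P) | Consistent G} := by
  refine fun G => ⟨fun hG H hHG _ hH => hG (DerivableFrom.mono hHG hH), fun hfin => ?_⟩
  rintro ⟨l, hl, hbot⟩
  exact hfin {φ | φ ∈ l} hl l.finite_toSet ⟨l, fun _ => id, hbot⟩

theorem mcs_iff_maximal : MCS G ↔ Maximal Consistent G :=
  and_congr_right fun _ => forall₂_congr fun _ _ =>
    ⟨fun h hGH => (h hGH).le, fun h hGH => (h hGH).antisymm hGH⟩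

theorem Consistent.exists_mcs_superset (hG : Consistent G) : ∃ Θ, G ⊆ Θ ∧ MCS Θ := by
  obtain ⟨Θ, hGΘ, hΘ⟩ := isOfFiniteCharacter_setOf_consistent.exists_maximal hG
  exact ⟨Θ, hGΘ, mcs_iff_maximal.2 hΘ⟩

namespace MCS

theorem mem_of_consistent_insert (hG : MCS G) (h : Consistent (insert φ G)) : φ ∈ G :=
  (mcs_iff_maximal.1 hG).mem_of_prop_insert h

theorem mem_of_derivableFrom (hG : MCS G) (h : DerivableFrom G φ) : φ ∈ G :=
  hG.mem_of_consistent_insert (.insert_of_not_derivableFrom_neg (hG.1.not_derivableFrom_neg h))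

theorem mem_of_imp (hG : MCS G) (h : Derivable (φ.imp ψ)) (hφ : φ ∈ G) : ψ ∈ G :=
  hG.mem_of_derivableFrom (.mp (.of_derivable h) (.of_mem hφ))

theorem neg_mem_iff (hG : MCS G) : φ.neg ∈ G ↔ φ ∉ G := by
  refine ⟨fun hn h => hG.1.not_derivableFrom_neg (.of_mem h) (.of_mem hn), fun h => ?_⟩
  by_contra hn
  exact h (hG.mem_of_consistent_insert
    (.insert_of_not_derivableFrom_neg fun hd => hn (hG.mem_of_derivableFrom hd)))

theorem exists_preimage_U_subset_of_U_notMem (hΔ : MCS Δ) (h : φ.U ∉ Δ) :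
    ∃ Θ, MCS Θ ∧ Formula.U ⁻¹' Δ ⊆ Θ ∧ φ ∉ Θ := by
  have hφ : ¬ DerivableFrom (Formula.U ⁻¹' Δ) φ := fun hd =>
    h (hΔ.mem_of_derivableFrom hd.U_of_preimage_U)
  have hcons : Consistent (insert φ.neg (Formula.U ⁻¹' Δ)) :=
    .insert_of_not_derivableFrom_neg fun hd => hφ (hd.of_evalB_imp fun v => by simp [evalB])
  obtain ⟨Θ, hsub, hΘ⟩ := hcons.exists_mcs_superset
  obtain ⟨hφΘ, hUΘ⟩ := Set.insert_subset_iff.1 hsub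
  exact ⟨Θ, hΘ, hUΘ, hΘ.neg_mem_iff.1 hφΘ⟩

theorem khPart_eq_of_preimage_U_subset (hΔ : MCS Δ) (hΘ : MCS Θ) (h : Formula.U ⁻¹' Δ ⊆ Θ) :
    khPart Θ = khPart Δ := by
  have kh_mem_iff (ψ φ : Formula P) : ψ.kh φ ∈ Θ ↔ ψ.kh φ ∈ Δ := by
    refine ⟨fun hkh => ?_, fun hkh => h (hΔ.mem_of_imp (.fourKU ψ φ) hkh)⟩
    by_contra hnot
    have hneg : (ψ.kh φ).neg ∈ Θ := h (hΔ.mem_of_imp (.fiveKU ψ φ) (hΔ.neg_mem_iff.2 hnot))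
    exact hΘ.neg_mem_iff.1 hneg hkh
  ext χ
  refine and_congr_left ?_
  rintro ⟨ψ, φ, rfl⟩
  exact kh_mem_iff ψ φ

end MCS

end

/-- in the canonical model for a maximal consistent set Γ,
if φ belongs to every state Δ of S^c_Γ then Uφ belongs to every state Δ of S^c_Γ. -/
theorem canonical_U_lemma {P : Type} (Γ : Set (Formula P)) (hΓ : MCS Γ)
    (φ : Formula P) (h : ∀ Δ ∈ canonStates Γ, φ ∈ Δ) :
    ∀ Δ ∈ canonStates Γ, φ.U ∈ Δ := by
  rintro Δ ⟨hΔ, hΔΓ⟩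
  by_contra hU
  obtain ⟨Θ, hΘ, hUΘ, hφΘ⟩ := hΔ.exists_preimage_U_subset_of_U_notMem hU
  exact hφΘ (h Θ ⟨hΘ, (hΔ.khPart_eq_of_preimage_U_subset hΘ hUΘ).trans hΔΓ⟩)
end
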